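/- Let C be a category in which every span can be completed to a pullback square. Suppose the span u : X ⟶ Y, u' : X ⟶ Z has a minimal pullback completion (W, x : Y ⟶ W, x' : Z ⟶ W): the square u ≫ x = u' ≫ x' is a pullback, and for every other pullback completion (W₁, x₁ : Y ⟶ W₁, x₁' : Z ⟶ W₁) of the same span there is a unique t : W ⟶ W₁ with x ≫ t = x₁ and x' ≫ t = x₁'. Then x and x' are jointly epic: for all f, g : W ⟶ V, if x ≫ f = x ≫ g and x' ≫ f = x' ≫ g then f = g. -/

import Mathlib

open CategoryTheory

/-- The legs of a minimal pullback completion of a span are jointly epic. -/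
theorem jointly_epic_of_minimal_pullback {C : Type*} [Category C]
    (H : ∀ {X Y Z : C} (u : X ⟶ Y) (u' : X ⟶ Z),
      ∃ (W : C) (x : Y ⟶ W) (x' : Z ⟶ W), IsPullback u u' x x')
    {X Y Z W : C} (u : X ⟶ Y) (u' : X ⟶ Z) (x : Y ⟶ W) (x' : Z ⟶ W)
    (hpb : IsPullback u u' x x')
    (hmin : ∀ {W₁ : C} (x₁ : Y ⟶ W₁) (x₁' : Z ⟶ W₁), IsPullback u u' x₁ x₁' →
      ∃! t : W ⟶ W₁, x ≫ t = x₁ ∧ x' ≫ t = x₁')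
    {V : C} (f g : W ⟶ V) (hxf : x ≫ f = x ≫ g) (hxf' : x' ≫ f = x' ≫ g) :
    f = g := by
  obtain ⟨_, _, _, h⟩ := H f f
  have : Mono f := ⟨fun _ _ e => h.hom_ext e e⟩
  have hf : IsPullback u u' (x ≫ f) (x' ≫ f) :=
    ⟨⟨by simp only [← Category.assoc, hpb.w]⟩,
      ⟨Limits.PullbackCone.isLimitOfCompMono x x' f _ hpb.isLimit⟩⟩
  exact (hmin _ _ hf).unique ⟨rfl, rfl⟩ ⟨hxf.symm, hxf'.symm⟩
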